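/- Let G be a finite connected simple graph, let w be an injective weight function from the edges of G to the reals, and let T be the (unique) minimum-weight spanning tree of G. Let e be an edge of G not in T with endpoints u and v, and let w' be a weight function agreeing with w on every edge except e, with w'(e) < w(e), and with w' still injective. Let f be the maximum-weight (under w') edge on the unique path in T from u to v. If w'(e) > w'(f) then T is the minimum-weight spanning tree of G under w'; otherwise (T ∪ {e}) ∖ {f} is the minimum-weight spanning tree of G under w'. -/

import Mathlib

open SimpleGraph

/-- The total weight of (the edges of) a graph. -/
noncomputable def totalWeight {V : Type*} (w : Sym2 V → ℝ) (H : SimpleGraph V) : ℝ :=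
  ∑ᶠ e ∈ H.edgeSet, w e

/-- `T` is a minimum-weight spanning tree of `G` with respect to the edge weights `w`. -/
def IsMinSpanningTree {V : Type*} (G : SimpleGraph V) (w : Sym2 V → ℝ)
    (T : SimpleGraph V) : Prop :=
  T ≤ G ∧ T.IsTree ∧ ∀ T' : SimpleGraph V, T' ≤ G → T'.IsTree →
    totalWeight w T ≤ totalWeight w T'

lemma walk_reach_aux {V : Type*} {T H : SimpleGraph V} {u v : V} (p : T.Walk u v)
    (h : ∀ x y, s(x, y) ∈ p.edges → H.Reachable x y) : H.Reachable u v := by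
  induction p with
  | nil => exact Reachable.refl _
  | cons hadj q ih =>
    refine (h _ _ (by simp)).trans (ih fun x y hxy => h x y ?_)
    simp only [Walk.edges_cons, List.mem_cons]
    exact Or.inr hxy

lemma swap_edgeSet {V : Type*} (T : SimpleGraph V) (e : Sym2 V) {x y : V} (hne : x ≠ y) :
    (T.deleteEdges {e} ⊔ edge x y).edgeSet = insert s(x, y) (T.edgeSet \ {e}) := by
  rw [edgeSet_sup, edgeSet_deleteEdges, edgeSet_edge_of_ne hne, Set.union_singleton]

lemma swap_isTree {V : Type*} {T : SimpleGraph V} (hT : T.IsTree) {e : Sym2 V}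
    {x y : V} (hxy : ¬ (T.deleteEdges {e}).Reachable x y) :
    (T.deleteEdges {e} ⊔ edge x y).IsTree := by
  induction e with | h a b => ?_
  have := hT.connected.nonempty
  set H := T.deleteEdges {s(a, b)} with hH
  have hne : x ≠ y := by rintro rfl; exact hxy (Reachable.refl _)
  have key : ∀ {z t : V}, T.Walk z t → (t = a) → H.Reachable z a ∨ H.Reachable z b := by
    intro z t q ht
    induction q with
    | nil => subst ht; exact Or.inl (Reachable.refl _)
    | @cons c d t' hadj q ih =>
      by_cases hc : s(c, d) = s(a, b)
      · rcases Sym2.eq_iff.1 hc with ⟨rfl, rfl⟩ | ⟨rfl, rfl⟩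
        · exact Or.inl (Reachable.refl _)
        · exact Or.inr (Reachable.refl _)
      · have : H.Adj c d := by simp [hH, deleteEdges_adj, hadj, hc]
        exact (ih ht).imp this.reachable.trans this.reachable.trans
  have key' : ∀ z, H.Reachable z a ∨ H.Reachable z b := fun z =>
    key (hT.connected z a).some rfl
  have hle : H ≤ H ⊔ edge x y := le_sup_left
  have hxyR : (H ⊔ edge x y).Reachable x y := by
    apply Adj.reachable
    simp [edge_adj, hne]
  have hab : (H ⊔ edge x y).Reachable a b := by
    rcases key' x with hx | hx <;> rcases key' y with hy | hy
    · exact absurd (hx.trans hy.symm) hxy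
    · exact ((hx.mono hle).symm.trans hxyR).trans (hy.mono hle)
    · exact (((hx.mono hle).symm.trans hxyR).trans (hy.mono hle)).symm
    · exact absurd (hx.trans hy.symm) hxy
  have hall : ∀ z, (H ⊔ edge x y).Reachable z a := by
    intro z
    rcases key' z with h | h
    · exact h.mono hle
    · exact (h.mono hle).trans hab.symm
  refine ⟨⟨fun z t => (hall z).trans (hall t).symm⟩, ?_⟩
  exact IsAcyclic.sup_edge_of_not_reachable hxy (hT.isAcyclic.anti (deleteEdges_le _))

lemma swap_weight {V : Type*} [Fintype V] (w : Sym2 V → ℝ) (T : SimpleGraph V) {e : Sym2 V}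
    (he : e ∈ T.edgeSet) {x y : V} (hxy : ¬ (T.deleteEdges {e}).Reachable x y) :
    totalWeight w (T.deleteEdges {e} ⊔ edge x y) = totalWeight w T - w e + w s(x, y) := by
  have hne : x ≠ y := by rintro rfl; exact hxy (Reachable.refl _)
  have hmem : s(x, y) ∉ T.edgeSet \ {e} := by
    rw [← edgeSet_deleteEdges]
    intro h
    exact hxy (Adj.reachable h)
  have h1 : totalWeight w T = w e + ∑ᶠ g ∈ T.edgeSet \ {e}, w g := by
    unfold totalWeight
    rw [← finsum_mem_insert w (by simp) (Set.toFinite _), Set.insert_diff_singleton,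
      Set.insert_eq_of_mem he]
  rw [h1]
  unfold totalWeight
  rw [swap_edgeSet T e hne, finsum_mem_insert w hmem (Set.toFinite _)]
  ring

/-- Correctness of the weight-decrease update for dynamic minimum spanning trees.
Decrease the weight of a non-tree edge `e = s(u,v)` of `G`, where `T` is the minimum
spanning tree, and let `f` be the maximum-weight edge on the unique path `p` in `T` from
`u` to `v`.  If `w'(e) > w'(f)` then `T` remains minimum; otherwise `(T ∪ {e}) \ {f}` is
the new minimum spanning tree. -/
theorem mst_weight_decrease_update {V : Type*} [Fintype V]
    (G : SimpleGraph V) (hG : G.Connected)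
    (w w' : Sym2 V → ℝ) (hw : Set.InjOn w G.edgeSet) (hw' : Set.InjOn w' G.edgeSet)
    (T : SimpleGraph V) (hT : IsMinSpanningTree G w T)
    (u v : V) (huv : G.Adj u v) (hnt : s(u, v) ∉ T.edgeSet)
    (hagree : ∀ g ∈ G.edgeSet, g ≠ s(u, v) → w' g = w g)
    (hdec : w' s(u, v) < w s(u, v))
    (p : T.Walk u v) (hp : p.IsPath)
    (f : Sym2 V) (hf : f ∈ p.edges)
    (hfmax : ∀ f' ∈ p.edges, w' f' ≤ w' f) :
    (w' f < w' s(u, v) → IsMinSpanningTree G w' T) ∧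
    (¬ w' f < w' s(u, v) →
      IsMinSpanningTree G w'
        (SimpleGraph.fromEdgeSet ((T.edgeSet ∪ {s(u, v)}) \ {f}))) := by
  classical
  obtain ⟨hTG, hTt, hTmin⟩ := hT
  have hfT : f ∈ T.edgeSet := p.edges_subset_edgeSet hf
  have hweq : ∀ F : SimpleGraph V, F ≤ G → s(u, v) ∉ F.edgeSet →
      totalWeight w' F = totalWeight w F := by
    intro F hF he
    unfold totalWeight
    refine finsum_mem_congr rfl fun g hg => hagree g (edgeSet_mono hF hg) ?_
    rintro rfl
    exact he hg
  have hno : ∀ F : SimpleGraph V, F ≤ G → F.IsTree → s(u, v) ∉ F.edgeSet →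
      totalWeight w' T ≤ totalWeight w' F := by
    intro F hF hFt he
    rw [hweq F hF he, hweq T hTG hnt]
    exact hTmin F hF hFt
  have hyes : ∀ F : SimpleGraph V, F ≤ G → F.IsTree → s(u, v) ∈ F.edgeSet →
      totalWeight w' T - w' f + w' s(u, v) ≤ totalWeight w' F := by
    intro F hF hFt he
    have hnr : ¬ (F.deleteEdges {s(u, v)}).Reachable u v :=
      isBridge_iff.1 (isAcyclic_iff_forall_isBridge.1 hFt.isAcyclic he)
    obtain ⟨x, y, hxyp, hxy⟩ : ∃ x y, s(x, y) ∈ p.edges ∧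
        ¬ (F.deleteEdges {s(u, v)}).Reachable x y := by
      by_contra hcon
      push Not at hcon
      exact hnr (walk_reach_aux p hcon)
    have hgT : s(x, y) ∈ T.edgeSet := p.edges_subset_edgeSet hxyp
    have hne : x ≠ y := (show T.Adj x y from hgT).ne
    have hle : F.deleteEdges {s(u, v)} ⊔ edge x y ≤ G := by
      rw [← edgeSet_subset_edgeSet, swap_edgeSet F _ hne]
      rintro g (rfl | hg)
      · exact edgeSet_mono hTG hgT
      · exact edgeSet_mono hF hg.1
    have h1 := hno _ hle (swap_isTree hFt hxy) (by
      rw [swap_edgeSet F _ hne]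
      rintro (h | h)
      · exact hnt (h ▸ hgT)
      · exact h.2 rfl)
    rw [swap_weight w' F he hxy] at h1
    have := hfmax _ hxyp
    linarith
  refine ⟨fun hlt => ⟨hTG, hTt, fun F hF hFt => ?_⟩, fun hnl => ?_⟩
  · by_cases he : s(u, v) ∈ F.edgeSet
    · have := hyes F hF hFt he
      linarith
    · exact hno F hF hFt he
  · have hnr : ¬ (T.deleteEdges {f}).Reachable u v := by
      intro h
      obtain ⟨q, hq⟩ := h.exists_isPath
      have hle : T.deleteEdges {f} ≤ T := deleteEdges_le _
      have heq := congrArg Subtype.val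
        (hTt.isAcyclic.path_unique ⟨p, hp⟩ ⟨q.mapLe hle, hq.mapLe hle⟩)
      simp only at heq
      rw [heq] at hf
      have hf' : f ∈ q.edges := by simpa using hf
      have := q.edges_subset_edgeSet hf'
      rw [edgeSet_deleteEdges] at this
      exact this.2 rfl
    have hne : u ≠ v := huv.ne
    have hef : s(u, v) ≠ f := fun h => hnt (h ▸ hfT)
    have hEq : SimpleGraph.fromEdgeSet ((T.edgeSet ∪ {s(u, v)}) \ {f}) =
        T.deleteEdges {f} ⊔ edge u v := by
      rw [← fromEdgeSet_edgeSet (T.deleteEdges {f} ⊔ edge u v), swap_edgeSet T f hne]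
      congr 1
      ext g
      simp only [Set.mem_diff, Set.mem_union, Set.mem_singleton_iff, Set.mem_insert_iff]
      constructor
      · rintro ⟨h | h, h2⟩
        · exact Or.inr ⟨h, h2⟩
        · exact Or.inl h
      · rintro (rfl | h)
        · exact ⟨Or.inr rfl, hef⟩
        · exact ⟨Or.inl h.1, h.2⟩
    rw [hEq]
    refine ⟨?_, swap_isTree hTt hnr, fun F hF hFt => ?_⟩
    · rw [← edgeSet_subset_edgeSet, swap_edgeSet T _ hne]
      rintro g (rfl | hg)
      · exact huv
      · exact edgeSet_mono hTG hg.1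
    · rw [swap_weight w' T hfT hnr]
      by_cases he : s(u, v) ∈ F.edgeSet
      · exact hyes F hF hFt he
      · have := hno F hF hFt he
        linarith
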